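/- (Lower bound via reward noise.) If 0 < E_μ[ρ²σ²] < ∞, then the minimax risk satisfies R_n ≥ ( E_μ[ρ²σ²] / (32·e·n) ) · ( 1 − E_μ[ ρ²σ² · 1( ρσ² > Rmax·√(n·E_μ[ρ²σ²]/2) ) ] / E_μ[ρ²σ²] )². -/

import Mathlib

open MeasureTheory ProbabilityTheory Real
open scoped ENNReal BigOperators Classical

/-- A policy assigns to each context a probability mass function over actions. -/
structure Policy (X A : Type*) [MeasurableSpace X] [Fintype A] where
  prob : X → A → ℝ
  nonneg : ∀ x a, 0 ≤ prob x a
  sum_one : ∀ x, ∑ a, prob x a = 1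
  meas : ∀ a, Measurable fun x => prob x a

variable {X A : Type*} [MeasurableSpace X] [Fintype A] [Nonempty A]
  [MeasurableSpace A] [MeasurableSingletonClass A]

/-- Importance weight ρ(x,a) = π(a|x)/μ(a|x). -/
noncomputable def impW (μp πp : Policy X A) (p : X × A) : ℝ :=
  πp.prob p.1 p.2 / μp.prob p.1 p.2

/-- E_μ[f] : expectation of f(x,a) for x ∼ λ, a ∼ μ(·|x). -/
noncomputable def Emu (lam : Measure X) (μp : Policy X A) (f : X × A → ℝ) : ℝ :=
  ∫ x, ∑ a, μp.prob x a * f (x, a) ∂lam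

/-- The distribution P_μ of (x,a) with x ∼ λ, a ∼ μ(·|x). -/
noncomputable def Policy.joint (lam : Measure X) (μp : Policy X A) : Measure (X × A) :=
  lam.bind fun x => Measure.sum fun a : A => ENNReal.ofReal (μp.prob x a) • Measure.dirac (x, a)

/-- Mean reward r*(x,a) of a reward kernel. -/
noncomputable def rstar (D : Kernel (X × A) ℝ) (p : X × A) : ℝ := ∫ r, r ∂(D p)

/-- The value of the target policy π. -/
noncomputable def vpi (lam : Measure X) (πp : Policy X A) (D : Kernel (X × A) ℝ) : ℝ :=
  ∫ x, ∑ a, πp.prob x a * rstar D (x, a) ∂lam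

/-- The joint distribution P_μ^D of ((x,a),r): x ∼ λ, a ∼ μ(·|x), r ∼ D(·|x,a). -/
noncomputable def sampleMeasure (lam : Measure X) (μp : Policy X A) (D : Kernel (X × A) ℝ) :
    Measure ((X × A) × ℝ) :=
  (Policy.joint lam μp).bind fun p => (D p).map fun r => (p, r)

/-- The class R(σ,Rmax) of reward kernels: Markov kernels with finite second moments such
that P_μ-a.s. 0 ≤ r*(x,a) ≤ Rmax(x,a) and Var(r|x,a) ≤ σ(x,a)². -/
def InRewardClass (lam : Measure X) (μp : Policy X A) (σf Rmax : X × A → ℝ)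
    (D : Kernel (X × A) ℝ) : Prop :=
  IsMarkovKernel D ∧ (∀ p, Integrable (fun r => r ^ 2) (D p)) ∧
    (∀ᵐ p ∂Policy.joint lam μp,
      0 ≤ rstar D p ∧ rstar D p ≤ Rmax p ∧ variance id (D p) ≤ σf p ^ 2)

/-- Minimax risk of off-policy evaluation from n i.i.d. samples. -/
noncomputable def minimaxRisk (lam : Measure X) (μp πp : Policy X A)
    (σf Rmax : X × A → ℝ) (n : ℕ) : ℝ≥0∞ :=
  ⨅ (vhat : (Fin n → (X × A) × ℝ) → ℝ) (_ : Measurable vhat),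
    ⨆ (D : Kernel (X × A) ℝ) (_ : InRewardClass lam μp σf Rmax D),
      ∫⁻ ω, ENNReal.ofReal ((vhat ω - vpi lam πp D) ^ 2)
        ∂(Measure.pi fun _ : Fin n => sampleMeasure lam μp D)

lemma aux_lintegral_prod_dep {Y : Type*} [MeasurableSpace Y] (ν : Measure Y) [SigmaFinite ν]
    (n : ℕ) (f : Fin n → Y → ℝ≥0∞) (hf : ∀ i, Measurable (f i)) :
    ∫⁻ ω : Fin n → Y, ∏ i, f i (ω i) ∂(Measure.pi fun _ => ν) = ∏ i, ∫⁻ y, f i y ∂ν := by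
  induction n with
  | zero => simp
  | succ n ih =>
    have hm := (measurePreserving_piFinSuccAbove (fun _ : Fin (n+1) => ν) 0).symm
    rw [← hm.lintegral_comp_emb (MeasurableEquiv.measurableEmbedding _)]
    simp_rw [MeasurableEquiv.piFinSuccAbove_symm_apply, Fin.insertNthEquiv,
      Fin.prod_univ_succ, Fin.insertNth_zero]
    simp only [Equiv.coe_fn_mk, Fin.cons_zero, Fin.cons_succ]
    have h2 : Measurable fun ω : Fin n → Y => ∏ i, f i.succ (ω i) :=
      Finset.measurable_prod _ fun i _ => (hf _).comp (measurable_pi_apply i)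
    rw [← ih (fun i => f i.succ) (fun i => hf _)]
    exact lintegral_prod_mul (μ := ν) (ν := Measure.pi fun _ : Fin n => ν) (f := f 0) (g := fun ω : Fin n → Y => ∏ i, f i.succ (ω i))
      (hf 0).aemeasurable h2.aemeasurable

lemma aux_lintegral_prod {Y : Type*} [MeasurableSpace Y] (ν : Measure Y) [SigmaFinite ν]
    (f : Y → ℝ≥0∞) (hf : Measurable f) (n : ℕ) :
    ∫⁻ ω : Fin n → Y, ∏ i, f (ω i) ∂(Measure.pi fun _ => ν) = (∫⁻ y, f y ∂ν) ^ n := by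
  rw [aux_lintegral_prod_dep ν n (fun _ => f) (fun _ => hf)]
  simp

lemma aux_pi_withDensity {Y : Type*} [MeasurableSpace Y] (ν : Measure Y) [SigmaFinite ν]
    (f : Y → ℝ≥0∞) (hf : Measurable f) (n : ℕ) [SigmaFinite (ν.withDensity f)]
    (g : (Fin n → Y) → ℝ≥0∞) (hg : Measurable g) :
    ∫⁻ ω : Fin n → Y, g ω ∂(Measure.pi fun _ => ν.withDensity f) =
      ∫⁻ ω : Fin n → Y, (∏ i, f (ω i)) * g ω ∂(Measure.pi fun _ => ν) := by
  have h2 : Measurable fun ω : Fin n → Y => ∏ i, f (ω i) := by fun_prop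
  have h3 := lintegral_withDensity_eq_lintegral_mul (Measure.pi fun _ : Fin n => ν) h2 hg
  refine Eq.trans ?_ h3
  congr 1
  refine Measure.pi_eq fun s hs => ?_
  rw [withDensity_apply _ (MeasurableSet.univ_pi hs), ← lintegral_indicator (MeasurableSet.univ_pi hs)]
  have hd : ∀ i, (ν.withDensity f) (s i) = ∫⁻ y, (s i).indicator f y ∂ν := fun i => by
    rw [withDensity_apply _ (hs i), lintegral_indicator (hs i)]
  rw [Finset.prod_congr rfl fun i _ => hd i]
  rw [← aux_lintegral_prod_dep ν n (fun i => (s i).indicator f) (fun i => hf.indicator (hs i))]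
  refine lintegral_congr fun ω => ?_
  by_cases h : ω ∈ Set.univ.pi s
  · rw [Set.indicator_of_mem h]
    exact Finset.prod_congr rfl fun i _ => (Set.indicator_of_mem (h i trivial) f).symm
  · rw [Set.indicator_of_notMem h]
    simp only [Set.mem_univ_pi, not_forall] at h
    obtain ⟨i, hi⟩ := h
    exact (Finset.prod_eq_zero (Finset.mem_univ i) (Set.indicator_of_notMem hi f)).symm

lemma aux_two_point {Y : Type*} [MeasurableSpace Y] (ν : Measure Y) [SigmaFinite ν]
    (s0 s1 : Y → ℝ≥0∞) (h0 : Measurable s0) (h1 : Measurable s1)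
    (hs0 : ∫⁻ y, s0 y ^ 2 ∂ν = 1) (hs1 : ∫⁻ y, s1 y ^ 2 ∂ν = 1) (n : ℕ)
    (v : (Fin n → Y) → ℝ) (hv : Measurable v) (v0 v1 : ℝ) (R : ℝ≥0∞)
    (hR0 : ∫⁻ ω, ENNReal.ofReal ((v ω - v0) ^ 2)
      ∂(Measure.pi fun _ : Fin n => ν.withDensity fun y => s0 y ^ 2) ≤ R)
    (hR1 : ∫⁻ ω, ENNReal.ofReal ((v ω - v1) ^ 2)
      ∂(Measure.pi fun _ : Fin n => ν.withDensity fun y => s1 y ^ 2) ≤ R) :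
    ENNReal.ofReal ((v1 - v0) ^ 2) * ((∫⁻ y, s0 y * s1 y ∂ν) ^ n) ^ 2 ≤ 4 * R := by
  have key : ∀ (s t : Y → ℝ≥0∞) (_ : Measurable s) (_ : Measurable t)
      (_ : ∫⁻ y, s y ^ 2 ∂ν = 1) (_ : ∫⁻ y, t y ^ 2 ∂ν = 1) (c : ℝ)
      (_ : ∫⁻ ω, ENNReal.ofReal ((v ω - c) ^ 2)
        ∂(Measure.pi fun _ : Fin n => ν.withDensity fun y => s y ^ 2) ≤ R),
      ∫⁻ ω, ENNReal.ofReal |v ω - c| * ((∏ i, s (ω i)) * ∏ i, t (ω i)) ∂(Measure.pi fun _ => ν)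
        ≤ R ^ (1 / 2 : ℝ) := by
    intro s t hs ht hs2 ht2 c hc
    have : IsProbabilityMeasure (ν.withDensity fun y => s y ^ 2) :=
      ⟨by rw [withDensity_apply _ MeasurableSet.univ]; simpa using hs2⟩
    have hm1 : Measurable fun ω : Fin n → Y => ENNReal.ofReal |v ω - c| * ∏ i, s (ω i) := by
      have : Measurable fun ω => |v ω - c| := (hv.sub_const c).abs
      fun_prop
    have hm2 : Measurable fun ω : Fin n → Y => ∏ i, t (ω i) := by fun_prop
    have H := ENNReal.lintegral_mul_le_Lp_mul_Lq (Measure.pi fun _ : Fin n => ν)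
      (Real.HolderConjugate.two_two) hm1.aemeasurable hm2.aemeasurable
    have e2 : ∫⁻ ω : Fin n → Y, (∏ i, t (ω i)) ^ (2:ℝ) ∂(Measure.pi fun _ => ν) = 1 := by
      have := aux_lintegral_prod ν (fun y => t y ^ 2) (by fun_prop) n
      simp only [Finset.prod_pow, ht2, one_pow] at this
      simpa using this
    have e1 : ∫⁻ ω : Fin n → Y, (ENNReal.ofReal |v ω - c| * ∏ i, s (ω i)) ^ (2:ℝ)
        ∂(Measure.pi fun _ => ν) ≤ R := by
      rw [aux_pi_withDensity ν _ (by fun_prop) n _ (by fun_prop)] at hc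
      refine le_trans (le_of_eq ?_) hc
      refine lintegral_congr fun ω => ?_
      rw [Finset.prod_pow, ← sq_abs, ENNReal.ofReal_pow (abs_nonneg _)]
      simp [mul_pow, mul_comm]
    rw [e2, ENNReal.one_rpow, mul_one] at H
    refine le_trans (le_of_eq ?_) (H.trans (ENNReal.rpow_le_rpow e1 (by norm_num)))
    refine lintegral_congr fun ω => ?_
    simp [mul_assoc]
  have k0 := key s0 s1 h0 h1 hs0 hs1 v0 hR0
  have k1 := key s1 s0 h1 h0 hs1 hs0 v1 hR1
  have hmain : ENNReal.ofReal |v1 - v0| * (∫⁻ y, s0 y * s1 y ∂ν) ^ n ≤ 2 * R ^ (1 / 2 : ℝ) := by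
    rw [← aux_lintegral_prod ν _ (by fun_prop) n, ← lintegral_const_mul _ (by fun_prop), two_mul]
    refine le_trans ?_ (add_le_add k0 k1)
    have hm : Measurable fun ω => |v ω - v0| := (hv.sub_const v0).abs
    rw [← lintegral_add_left (by fun_prop)]
    refine lintegral_mono fun ω => ?_
    simp only [Finset.prod_mul_distrib]
    rw [mul_comm (∏ i, s1 (ω i)), ← add_mul]
    gcongr
    rw [← ENNReal.ofReal_add (abs_nonneg _) (abs_nonneg _)]
    apply ENNReal.ofReal_le_ofReal
    have := abs_sub (v ω - v0) (v ω - v1)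
    rwa [show v ω - v0 - (v ω - v1) = v1 - v0 by ring] at this
  have := pow_le_pow_left' hmain 2
  rw [mul_pow, mul_pow, ← ENNReal.ofReal_pow (abs_nonneg _), sq_abs, ← ENNReal.rpow_mul_natCast] at this
  norm_num at this
  exact this

lemma aux_joint_meas (μp : Policy X A) : Measurable fun x : X =>
    Measure.sum fun a : A => ENNReal.ofReal (μp.prob x a) • Measure.dirac (x, a) := by
  refine Measure.measurable_of_measurable_coe _ fun s hs => ?_
  simp only [Measure.sum_apply _ hs, Measure.smul_apply, Measure.dirac_apply' _ hs, smul_eq_mul,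
    tsum_fintype]
  refine Finset.measurable_sum _ fun a _ => ?_
  refine (ENNReal.measurable_ofReal.comp (μp.meas a)).mul ?_
  exact (measurable_one.indicator hs).comp (measurable_prodMk_right (y := a))

lemma aux_lintegral_joint (lam : Measure X) (μp : Policy X A) (f : X × A → ℝ≥0∞)
    (hf : Measurable f) :
    ∫⁻ p, f p ∂(Policy.joint lam μp) =
      ∫⁻ x, ∑ a, ENNReal.ofReal (μp.prob x a) * f (x, a) ∂lam := by
  rw [Policy.joint, Measure.lintegral_bind (aux_joint_meas μp).aemeasurable hf.aemeasurable]
  refine lintegral_congr fun x => ?_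
  rw [lintegral_sum_measure, tsum_fintype]
  simp [lintegral_smul_measure, lintegral_dirac' _ hf]

lemma aux_joint_prob (lam : Measure X) [IsProbabilityMeasure lam] (μp : Policy X A) :
    IsProbabilityMeasure (Policy.joint lam μp) := by
  constructor
  have := aux_lintegral_joint lam μp (fun _ => 1) measurable_const
  simp only [lintegral_one, mul_one] at this
  rw [this]
  simp_rw [← ENNReal.ofReal_sum_of_nonneg (fun a _ => μp.nonneg _ a), μp.sum_one]
  simp

/-- Two-point kernel. -/
noncomputable def twoK {Z : Type*} [MeasurableSpace Z] (q gT gF : Z → ℝ) (hq : Measurable q)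
    (hT : Measurable gT) (hF : Measurable gF) : Kernel Z ℝ where
  toFun p := ENNReal.ofReal (q p) • Measure.dirac (gT p)
    + ENNReal.ofReal (1 - q p) • Measure.dirac (gF p)
  measurable' := by
    refine Measure.measurable_of_measurable_coe _ fun s hs => ?_
    simp only [Measure.coe_add, Pi.add_apply, Measure.smul_apply, Measure.dirac_apply' _ hs,
      smul_eq_mul]
    have h1 : Measurable fun p => s.indicator (1 : ℝ → ℝ≥0∞) (gT p) :=
      (measurable_one.indicator hs).comp hT
    have h2 : Measurable fun p => s.indicator (1 : ℝ → ℝ≥0∞) (gF p) :=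
      (measurable_one.indicator hs).comp hF
    fun_prop

lemma twoK_apply {Z : Type*} [MeasurableSpace Z] (q gT gF : Z → ℝ) (hq : Measurable q)
    (hT : Measurable gT) (hF : Measurable gF) (p : Z) :
    twoK q gT gF hq hT hF p = ENNReal.ofReal (q p) • Measure.dirac (gT p)
    + ENNReal.ofReal (1 - q p) • Measure.dirac (gF p) := rfl

lemma twoK_markov {Z : Type*} [MeasurableSpace Z] (q gT gF : Z → ℝ) (hq : Measurable q)
    (hT : Measurable gT) (hF : Measurable gF) (h0 : ∀ p, 0 ≤ q p) (h1 : ∀ p, q p ≤ 1) :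
    IsMarkovKernel (twoK q gT gF hq hT hF) := by
  refine ⟨fun p => ⟨?_⟩⟩
  rw [twoK_apply]
  simp only [Measure.coe_add, Pi.add_apply, Measure.smul_apply, measure_univ, smul_eq_mul, mul_one]
  rw [← ENNReal.ofReal_add (h0 p) (by linarith [h1 p])]
  simp

lemma twoK_integrable {Z : Type*} [MeasurableSpace Z] (q gT gF : Z → ℝ) (hq : Measurable q)
    (hT : Measurable gT) (hF : Measurable gF) (p : Z) (f : ℝ → ℝ) :
    Integrable f (twoK q gT gF hq hT hF p) := by
  rw [twoK_apply]
  refine Integrable.add_measure ?_ ?_ <;>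
  · refine Integrable.smul_measure ?_ ENNReal.ofReal_ne_top
    exact integrable_dirac (by simp)

lemma twoK_integral {Z : Type*} [MeasurableSpace Z] (q gT gF : Z → ℝ) (hq : Measurable q)
    (hT : Measurable gT) (hF : Measurable gF) (h0 : ∀ p, 0 ≤ q p) (h1 : ∀ p, q p ≤ 1)
    (p : Z) (f : ℝ → ℝ) :
    ∫ r, f r ∂(twoK q gT gF hq hT hF p) = q p * f (gT p) + (1 - q p) * f (gF p) := by
  rw [twoK_apply, integral_add_measure, integral_smul_measure, integral_smul_measure,
    integral_dirac, integral_dirac, ENNReal.toReal_ofReal (h0 p),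
    ENNReal.toReal_ofReal (by linarith [h1 p]), smul_eq_mul, smul_eq_mul]
  all_goals
    refine Integrable.smul_measure ?_ ENNReal.ofReal_ne_top
    exact integrable_dirac (by simp)

lemma aux_nu (m : Measure (X × A)) [IsFiniteMeasure m] (f : (X × A) × Bool → ℝ≥0∞)
    (hf : Measurable f) :
    ∫⁻ y, f y ∂(m.prod Measure.count) = ∫⁻ p, (f (p, true) + f (p, false)) ∂m := by
  rw [lintegral_prod _ hf.aemeasurable]
  refine lintegral_congr fun p => ?_
  rw [lintegral_count, tsum_bool, add_comm]

/-- Root density. -/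
noncomputable def rootD (q : X × A → ℝ) (y : (X × A) × Bool) : ℝ≥0∞ :=
  ENNReal.ofReal (√(if y.2 = true then q y.1 else 1 - q y.1))

lemma rootD_meas (q : X × A → ℝ) (hq : Measurable q) : Measurable (rootD q) := by
  unfold rootD
  refine ENNReal.measurable_ofReal.comp (Measurable.sqrt ?_)
  refine Measurable.ite ?_ (by fun_prop) (by fun_prop)
  exact measurable_snd (MeasurableSet.singleton true)

lemma rootD_sq (q : X × A → ℝ) (h0 : ∀ p, 0 ≤ q p) (h1 : ∀ p, q p ≤ 1) (p : X × A) :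
    rootD q (p, true) ^ 2 = ENNReal.ofReal (q p) ∧
    rootD q (p, false) ^ 2 = ENNReal.ofReal (1 - q p) := by
  have : 0 ≤ 1 - q p := by linarith [h1 p]
  constructor <;> simp only [rootD] <;> rw [← ENNReal.ofReal_pow (Real.sqrt_nonneg _)] <;>
    simp [Real.sq_sqrt, h0, this]

lemma rootD_one (m : Measure (X × A)) [IsProbabilityMeasure m]
    (q : X × A → ℝ) (hq : Measurable q) (h0 : ∀ p, 0 ≤ q p) (h1 : ∀ p, q p ≤ 1) :
    ∫⁻ y, rootD q y ^ 2 ∂(m.prod Measure.count) = 1 := by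
  rw [aux_nu m _ ((rootD_meas q hq).pow_const 2)]
  simp_rw [rootD_sq q h0 h1]
  simp_rw [fun p => (ENNReal.ofReal_add (h0 p) (by linarith [h1 p] : 0 ≤ 1 - q p)).symm]
  simp

/-- Sample map. -/
noncomputable def sampG (gT gF : X × A → ℝ) (y : (X × A) × Bool) : (X × A) × ℝ :=
  (y.1, if y.2 = true then gT y.1 else gF y.1)

lemma sampG_meas (gT gF : X × A → ℝ) (hT : Measurable gT) (hF : Measurable gF) :
    Measurable (sampG gT gF) := by
  unfold sampG
  refine measurable_fst.prodMk (Measurable.ite ?_ (by fun_prop) (by fun_prop))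
  exact measurable_snd (MeasurableSet.singleton true)

lemma aux_sample (lam : Measure X) [IsProbabilityMeasure lam] (μp : Policy X A)
    (q gT gF : X × A → ℝ) (hq : Measurable q)
    (hT : Measurable gT) (hF : Measurable gF) (h0 : ∀ p, 0 ≤ q p) (h1 : ∀ p, q p ≤ 1) :
    sampleMeasure lam μp (twoK q gT gF hq hT hF) =
      Measure.map (sampG gT gF)
        (((Policy.joint lam μp).prod Measure.count).withDensity fun y => rootD q y ^ 2) := by
  have := aux_joint_prob lam μp
  have hk : ∀ (s : Set ((X × A) × ℝ)) (_ : MeasurableSet s) (p : X × A),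
      (Measure.map (fun r => (p, r)) (twoK q gT gF hq hT hF p)) s =
        ENNReal.ofReal (q p) * s.indicator 1 (p, gT p)
          + ENNReal.ofReal (1 - q p) * s.indicator 1 (p, gF p) := by
    intro s hs p
    rw [Measure.map_apply measurable_prodMk_left hs, twoK_apply]
    simp only [Measure.coe_add, Pi.add_apply, Measure.smul_apply, smul_eq_mul,
      Measure.dirac_apply' _ (measurable_prodMk_left hs)]
    rfl
  have hm : ∀ (s : Set ((X × A) × ℝ)) (_ : MeasurableSet s) (g : X × A → ℝ) (_ : Measurable g),
      Measurable fun p => s.indicator (1 : (X × A) × ℝ → ℝ≥0∞) (p, g p) := fun s hs g hg =>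
    (measurable_one.indicator hs).comp (measurable_id.prodMk hg)
  have hkm : Measurable fun p : X × A =>
      Measure.map (fun r => (p, r)) (twoK q gT gF hq hT hF p) := by
    refine Measure.measurable_of_measurable_coe _ fun s hs => ?_
    simp_rw [hk s hs]
    have := hm s hs gT hT
    have := hm s hs gF hF
    fun_prop
  have hG := sampG_meas gT gF hT hF
  ext s hs
  rw [sampleMeasure, Measure.bind_apply hs hkm.aemeasurable, Measure.map_apply hG hs,
    withDensity_apply _ (hG hs), ← lintegral_indicator (hG hs), aux_nu _ _
      (((rootD_meas q hq).pow_const 2).indicator (hG hs))]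
  refine lintegral_congr fun p => ?_
  rw [hk s hs]
  have e := rootD_sq q h0 h1 p
  congr 1
  · by_cases h : (p, gT p) ∈ s <;> simp [Set.indicator, sampG, h, e.1]
  · by_cases h : (p, gF p) ∈ s <;> simp [Set.indicator, sampG, h, e.2]

lemma aux_risk (lam : Measure X) [IsProbabilityMeasure lam] (μp : Policy X A)
    (q0 q1 gT gF : X × A → ℝ) (hq0 : Measurable q0) (hq1 : Measurable q1)
    (hT : Measurable gT) (hF : Measurable gF)
    (h00 : ∀ p, 0 ≤ q0 p) (h01 : ∀ p, q0 p ≤ 1) (h10 : ∀ p, 0 ≤ q1 p) (h11 : ∀ p, q1 p ≤ 1)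
    (n : ℕ) (v : (Fin n → (X × A) × ℝ) → ℝ) (hv : Measurable v) (v0 v1 : ℝ) (R : ℝ≥0∞)
    (hR0 : ∫⁻ ω, ENNReal.ofReal ((v ω - v0) ^ 2)
      ∂(Measure.pi fun _ : Fin n => sampleMeasure lam μp (twoK q0 gT gF hq0 hT hF)) ≤ R)
    (hR1 : ∫⁻ ω, ENNReal.ofReal ((v ω - v1) ^ 2)
      ∂(Measure.pi fun _ : Fin n => sampleMeasure lam μp (twoK q1 gT gF hq1 hT hF)) ≤ R) :
    ENNReal.ofReal ((v1 - v0) ^ 2) * ((∫⁻ p, ENNReal.ofReal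
      (√(q0 p) * √(q1 p) + √(1 - q0 p) * √(1 - q1 p)) ∂(Policy.joint lam μp)) ^ n) ^ 2 ≤ 4 * R := by
  have := aux_joint_prob lam μp
  have hG := sampG_meas gT gF hT hF
  have hGn : Measurable fun (ω : Fin n → (X × A) × Bool) i => sampG gT gF (ω i) :=
    measurable_pi_lambda _ fun i => hG.comp (measurable_pi_apply i)
  have h_trans : ∀ (q : X × A → ℝ) (hq : Measurable q) (_ : ∀ p, 0 ≤ q p) (_ : ∀ p, q p ≤ 1) (c : ℝ),
    ∫⁻ ω, ENNReal.ofReal ((v ω - c) ^ 2)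
      ∂(Measure.pi fun _ : Fin n => sampleMeasure lam μp (twoK q gT gF hq hT hF)) =
    ∫⁻ ω, ENNReal.ofReal ((v (fun i => sampG gT gF (ω i)) - c) ^ 2)
      ∂(Measure.pi fun _ : Fin n =>
        ((Policy.joint lam μp).prod Measure.count).withDensity fun y => rootD q y ^ 2) := by
    intro q hq h0 h1 c
    have : IsProbabilityMeasure
        (((Policy.joint lam μp).prod Measure.count).withDensity fun y => rootD q y ^ 2) :=
      ⟨by rw [withDensity_apply _ MeasurableSet.univ]
          simpa using rootD_one (Policy.joint lam μp) q hq h0 h1⟩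
    have : IsProbabilityMeasure (Measure.map (sampG gT gF)
        (((Policy.joint lam μp).prod Measure.count).withDensity fun y => rootD q y ^ 2)) :=
      Measure.isProbabilityMeasure_map hG.aemeasurable
    rw [aux_sample lam μp q gT gF hq hT hF h0 h1, ← Measure.pi_map_pi (fun _ => hG.aemeasurable),
      lintegral_map (by fun_prop) hGn]
  rw [h_trans q0 hq0 h00 h01] at hR0
  rw [h_trans q1 hq1 h10 h11] at hR1
  have H := aux_two_point _ (rootD q0) (rootD q1) (rootD_meas q0 hq0) (rootD_meas q1 hq1)
    (rootD_one (Policy.joint lam μp) q0 hq0 h00 h01)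
    (rootD_one (Policy.joint lam μp) q1 hq1 h10 h11) n _ (hv.comp hGn) v0 v1 R hR0 hR1
  rw [aux_nu _ (fun y => rootD q0 y * rootD q1 y)
    ((rootD_meas q0 hq0).mul (rootD_meas q1 hq1))] at H
  convert H using 5 with p
  funext p
  simp only [rootD]
  rw [← ENNReal.ofReal_mul (Real.sqrt_nonneg _), ← ENNReal.ofReal_mul (Real.sqrt_nonneg _),
    ← ENNReal.ofReal_add (by positivity) (by positivity)]
  simp

lemma aux_aff (u : ℝ) (hu : 0 ≤ u) (hu1 : u ≤ 1) :
    1 - u ^ 2 ≤ √(1 / 2) * √((1 + u) / 2) + √(1 - 1 / 2) * √(1 - (1 + u) / 2) := by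
  rw [← Real.sqrt_mul (by norm_num), ← Real.sqrt_mul (by norm_num)]
  have h1 : (1 + u / 2 - u ^ 2 / 2) / 2 ≤ √(1 / 2 * ((1 + u) / 2)) := by
    apply Real.le_sqrt_of_sq_le
    have : 0 ≤ u ^ 2 * (1 - u) := mul_nonneg (sq_nonneg u) (by linarith)
    nlinarith [sq_nonneg u, mul_nonneg this hu]
  have h2 : (1 - u / 2 - u ^ 2 / 2) / 2 ≤ √((1 - 1 / 2) * (1 - (1 + u) / 2)) := by
    apply Real.le_sqrt_of_sq_le
    have e : ((1 - u / 2 - u ^ 2 / 2) / 2) ^ 2 =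
      (1 - 1 / 2) * (1 - (1 + u) / 2) - (1 - u) * (3 * u ^ 2 + u ^ 3) / 16 := by ring
    have : 0 ≤ (1 - u) * (3 * u ^ 2 + u ^ 3) / 16 := by
      have : 0 ≤ 1 - u := by linarith
      positivity
    linarith
  nlinarith [sq_nonneg u]

lemma impW_meas (μp πp : Policy X A) : Measurable (impW μp πp) :=
  measurable_from_prod_countable_left fun a => (πp.meas a).div (μp.meas a)

lemma aux_aff_int (lam : Measure X) [IsProbabilityMeasure lam] (μp : Policy X A)
    (aff u : X × A → ℝ) (hu : Measurable u)
    (haff : ∀ p, 1 - u p ^ 2 ≤ aff p) (c : ℝ) (hc : 0 ≤ c)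
    (F : X → ℝ) (hF : Integrable F lam) (hFc : ∫ x, F x ∂lam = c)
    (huF : ∀ x, ∑ a, μp.prob x a * u (x, a) ^ 2 ≤ F x) :
    ENNReal.ofReal (1 - c) ≤ ∫⁻ p, ENNReal.ofReal (aff p) ∂(Policy.joint lam μp) := by
  have := aux_joint_prob lam μp
  have h1 : ∫⁻ p, ENNReal.ofReal (u p ^ 2) ∂(Policy.joint lam μp) ≤ ENNReal.ofReal c := by
    rw [aux_lintegral_joint lam μp _ (by fun_prop), ← hFc]
    have hF0 : ∀ x, 0 ≤ F x := fun x =>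
      (Finset.sum_nonneg fun a _ => mul_nonneg (μp.nonneg x a) (sq_nonneg _)).trans (huF x)
    rw [ofReal_integral_eq_lintegral_ofReal hF (Filter.Eventually.of_forall hF0)]
    refine lintegral_mono fun x => ?_
    simp_rw [← fun a => ENNReal.ofReal_mul (q := u (x, a) ^ 2) (μp.nonneg x a)]
    rw [← ENNReal.ofReal_sum_of_nonneg fun a _ => mul_nonneg (μp.nonneg x a) (sq_nonneg _)]
    exact ENNReal.ofReal_le_ofReal (huF x)
  rw [ENNReal.ofReal_sub _ hc, ENNReal.ofReal_one, tsub_le_iff_right]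
  calc (1 : ℝ≥0∞) = ∫⁻ p, 1 ∂(Policy.joint lam μp) := by simp
    _ ≤ ∫⁻ p, (ENNReal.ofReal (aff p) + ENNReal.ofReal (u p ^ 2)) ∂(Policy.joint lam μp) := by
        refine lintegral_mono fun p => ?_
        refine le_trans ?_ ENNReal.ofReal_add_le
        rw [ENNReal.one_le_ofReal]
        linarith [haff p]
    _ ≤ _ := by
        rw [lintegral_add_right _ (by fun_prop)]
        gcongr

/-- Theorem 3: lower bound via reward noise. -/
theorem minimax_lower_bound_noise
    (lam : Measure X) [IsProbabilityMeasure lam] (μp πp : Policy X A)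
    (habs : ∀ x a, 0 < πp.prob x a → 0 < μp.prob x a)
    (σf Rmax : X × A → ℝ) (hσm : Measurable σf) (hRm : Measurable Rmax)
    (hσnn : ∀ p, 0 ≤ σf p) (hRnn : ∀ p, 0 ≤ Rmax p)
    (V : ℝ) (hV : V = Emu lam μp fun p => impW μp πp p ^ 2 * σf p ^ 2)
    (hVpos : 0 < V)
    (hVfin : Integrable
      (fun x => ∑ a, μp.prob x a * (impW μp πp (x, a) ^ 2 * σf (x, a) ^ 2)) lam)
    (n : ℕ) :
    ENNReal.ofReal
      (V / (32 * Real.exp 1 * n) *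
        (1 - (Emu lam μp fun p =>
            if Rmax p * Real.sqrt (n * V / 2) < impW μp πp p * σf p ^ 2
            then impW μp πp p ^ 2 * σf p ^ 2 else 0) / V) ^ 2)
      ≤ minimaxRisk lam μp πp σf Rmax n := by
  rcases Nat.eq_zero_or_pos n with rfl | hn
  · simp
  have hnR : (0 : ℝ) < n := by exact_mod_cast hn
  have hn1 : (1 : ℝ) ≤ n := by exact_mod_cast hn
  set t : ℝ := Real.sqrt (n * V / 2) with ht
  have htpos : 0 < t := Real.sqrt_pos.2 (by positivity)
  have ht2 : t ^ 2 = n * V / 2 := Real.sq_sqrt (by positivity)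
  have hρm := impW_meas μp πp
  have hρnn : ∀ p, 0 ≤ impW μp πp p := fun p => div_nonneg (πp.nonneg _ _) (μp.nonneg _ _)
  have hμρ : ∀ x a, πp.prob x a = μp.prob x a * impW μp πp (x, a) := by
    intro x a
    simp only [impW]
    rcases (πp.nonneg x a).eq_or_lt with h | h
    · simp [← h]
    · have := habs x a h
      field_simp
  have hCm : MeasurableSet {p | Rmax p * t < impW μp πp p * σf p ^ 2} :=
    measurableSet_lt (by fun_prop) (by fun_prop)
  -- the two parts
  set b : X × A → ℝ := fun p => if Rmax p * t < impW μp πp p * σf p ^ 2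
            then impW μp πp p ^ 2 * σf p ^ 2 else 0 with hb
  set w : X × A → ℝ := fun p => if Rmax p * t < impW μp πp p * σf p ^ 2
            then 0 else impW μp πp p ^ 2 * σf p ^ 2 with hw
  have hbm : Measurable b := Measurable.ite hCm (by fun_prop) (by fun_prop)
  have hwm : Measurable w := Measurable.ite hCm (by fun_prop) (by fun_prop)
  have hbw : ∀ p, b p + w p = impW μp πp p ^ 2 * σf p ^ 2 := by
    intro p
    simp only [hb, hw]
    split_ifs <;> simp
  have hb0 : ∀ p, 0 ≤ b p := by
    intro p
    simp only [hb]
    split_ifs <;> positivity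
  have hw0 : ∀ p, 0 ≤ w p := by
    intro p
    simp only [hw]
    split_ifs <;> positivity
  have hpart : ∀ f : X × A → ℝ, Measurable f → (∀ p, 0 ≤ f p) →
      (∀ p, f p ≤ impW μp πp p ^ 2 * σf p ^ 2) →
      Integrable (fun x => ∑ a, μp.prob x a * f (x, a)) lam := by
    intro f hf h0 hle
    refine hVfin.mono' ?_ (Filter.Eventually.of_forall fun x => ?_)
    · refine (Finset.measurable_sum _ fun a _ => (μp.meas a).mul ?_).aestronglyMeasurable
      exact hf.comp measurable_prodMk_right
    · rw [Real.norm_of_nonneg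
        (Finset.sum_nonneg fun a _ => mul_nonneg (μp.nonneg x a) (h0 _))]
      exact Finset.sum_le_sum fun a _ => mul_le_mul_of_nonneg_left (hle _) (μp.nonneg x a)
  have hbi := hpart b hbm hb0 fun p => by linarith [hbw p, hw0 p]
  have hwi := hpart w hwm hw0 fun p => by linarith [hbw p, hb0 p]
  have hsum : Emu lam μp b + Emu lam μp w = V := by
    rw [hV]
    simp only [Emu]
    rw [← integral_add hbi hwi]
    refine integral_congr_ae (Filter.Eventually.of_forall fun x => ?_)
    simp only [← hbw, mul_add, Finset.sum_add_distrib]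
  -- the construction
  set u : X × A → ℝ := fun p => if Rmax p * t < impW μp πp p * σf p ^ 2
            then 0 else impW μp πp p * σf p / (2 * t) with hu
  have hum : Measurable u := Measurable.ite hCm (by fun_prop) (by fun_prop)
  have hu0 : ∀ p, 0 ≤ u p := by
    intro p
    have := hρnn p
    have := hσnn p
    simp only [hu]
    split_ifs <;> positivity
  have hu2 : ∀ p, u p ^ 2 = w p / (4 * t ^ 2) := by
    intro p
    simp only [hu, hw]
    split_ifs
    · simp
    · field_simp
      ring
  have hδ : ∀ p, σf p * u p ≤ Rmax p := by
    intro p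
    simp only [hu]
    split_ifs with h
    · simpa using hRnn p
    · rw [not_lt] at h
      have := hRnn p
      rw [← mul_div_assoc, div_le_iff₀ (by positivity)]
      nlinarith [mul_nonneg this htpos.le]
  have hUm : MeasurableSet {p | u p ≤ 1} := measurableSet_le hum measurable_const
  set q0 : X × A → ℝ := fun p => if u p ≤ 1 then 1 / 2 else 0 with hq0
  set q1 : X × A → ℝ := fun p => if u p ≤ 1 then (1 + u p) / 2 else 1 with hq1
  set gT : X × A → ℝ := fun p => if u p ≤ 1 then σf p else σf p * u p with hgT
  set gF : X × A → ℝ := fun p => if u p ≤ 1 then - σf p else 0 with hgF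
  have hq0m : Measurable q0 := Measurable.ite hUm (by fun_prop) (by fun_prop)
  have hq1m : Measurable q1 := Measurable.ite hUm (by fun_prop) (by fun_prop)
  have hgTm : Measurable gT := Measurable.ite hUm (by fun_prop) (by fun_prop)
  have hgFm : Measurable gF := Measurable.ite hUm (by fun_prop) (by fun_prop)
  have h00 : ∀ p, 0 ≤ q0 p := by
    intro p; simp only [hq0]; split_ifs <;> norm_num
  have h01 : ∀ p, q0 p ≤ 1 := by
    intro p; simp only [hq0]; split_ifs <;> norm_num
  have h10 : ∀ p, 0 ≤ q1 p := by
    intro p; simp only [hq1]; split_ifs <;> linarith [hu0 p]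
  have h11 : ∀ p, q1 p ≤ 1 := by
    intro p; simp only [hq1]; split_ifs <;> linarith [hu0 p]
  have hr0 : ∀ p, rstar (twoK q0 gT gF hq0m hgTm hgFm) p = 0 := by
    intro p
    rw [rstar, twoK_integral q0 gT gF hq0m hgTm hgFm h00 h01 p (fun r => r)]
    simp only [hq0, hgT, hgF]
    split_ifs <;> ring
  have hr1 : ∀ p, rstar (twoK q1 gT gF hq1m hgTm hgFm) p = σf p * u p := by
    intro p
    rw [rstar, twoK_integral q1 gT gF hq1m hgTm hgFm h10 h11 p (fun r => r)]
    simp only [hq1, hgT, hgF]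
    split_ifs <;> ring
  have hc0 : InRewardClass lam μp σf Rmax (twoK q0 gT gF hq0m hgTm hgFm) := by
    have := twoK_markov q0 gT gF hq0m hgTm hgFm h00 h01
    refine ⟨this, fun p => twoK_integrable q0 gT gF hq0m hgTm hgFm p _,
      Filter.Eventually.of_forall fun p => ?_⟩
    rw [hr0]
    refine ⟨le_rfl, hRnn p, ?_⟩
    refine (variance_le_expectation_sq measurable_id.aestronglyMeasurable).trans ?_
    have := twoK_integral q0 gT gF hq0m hgTm hgFm h00 h01 p (fun r => r ^ 2)
    simp only [Pi.pow_apply, id]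
    rw [this]
    simp only [hq0, hgT, hgF]
    split_ifs
    · nlinarith
    · nlinarith [sq_nonneg (σf p)]
  have hc1 : InRewardClass lam μp σf Rmax (twoK q1 gT gF hq1m hgTm hgFm) := by
    have := twoK_markov q1 gT gF hq1m hgTm hgFm h10 h11
    refine ⟨this, fun p => twoK_integrable q1 gT gF hq1m hgTm hgFm p _,
      Filter.Eventually.of_forall fun p => ?_⟩
    have hr := hr1 p
    rw [hr]
    refine ⟨mul_nonneg (hσnn p) (hu0 p), hδ p, ?_⟩
    rw [variance_eq_integral measurable_id.aemeasurable]
    simp only [id]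
    have hr' : ∫ r, r ∂(twoK q1 gT gF hq1m hgTm hgFm p) = σf p * u p := hr
    rw [hr', twoK_integral q1 gT gF hq1m hgTm hgFm h10 h11 p (fun r => (r - σf p * u p) ^ 2)]
    simp only [hq1, hgT, hgF]
    split_ifs
    · nlinarith [sq_nonneg (σf p * u p)]
    · nlinarith [sq_nonneg (σf p)]
  have hv0 : vpi lam πp (twoK q0 gT gF hq0m hgTm hgFm) = 0 := by
    simp [vpi, hr0]
  have hv1 : vpi lam πp (twoK q1 gT gF hq1m hgTm hgFm) = Emu lam μp w / (2 * t) := by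
    simp only [vpi, hr1, Emu]
    rw [← integral_div]
    refine integral_congr_ae (Filter.Eventually.of_forall fun x => ?_)
    simp only [Finset.sum_div]
    refine Finset.sum_congr rfl fun a _ => ?_
    rw [hμρ x a]
    simp only [hu, hw]
    split_ifs
    · simp
    · field_simp
  have haff : ∀ p, 1 - u p ^ 2 ≤ √(q0 p) * √(q1 p) + √(1 - q0 p) * √(1 - q1 p) := by
    intro p
    by_cases h : u p ≤ 1
    · simp only [hq0, hq1, if_pos h]
      exact aux_aff _ (hu0 p) h
    · simp only [hq0, hq1, if_neg h]
      rw [not_le] at h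
      have : 1 - u p ^ 2 ≤ 0 := by nlinarith
      exact this.trans (by positivity)
  have h_affint := aux_aff_int lam μp _ u hum haff (1 / (2 * n)) (by positivity) _
    (hVfin.div_const (4 * t ^ 2)) (by
      rw [integral_div]
      have hV' : ∫ x, ∑ a, μp.prob x a * (impW μp πp (x, a) ^ 2 * σf (x, a) ^ 2) ∂lam = V := hV.symm
      rw [hV', ht2]
      field_simp
      norm_num) (by
      intro x
      rw [Finset.sum_div]
      refine Finset.sum_le_sum fun a _ => ?_
      rw [hu2, ← mul_div_assoc]
      have := μp.nonneg x a
      gcongr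
      linarith [hbw (x, a), hb0 (x, a)])
  rw [_root_.minimaxRisk]
  refine le_iInf₂ fun vhat hvhat => ?_
  set R : ℝ≥0∞ := ⨆ (D : Kernel (X × A) ℝ) (_ : InRewardClass lam μp σf Rmax D),
      ∫⁻ ω, ENNReal.ofReal ((vhat ω - vpi lam πp D) ^ 2)
        ∂(Measure.pi fun _ : Fin n => sampleMeasure lam μp D) with hR
  have H := aux_risk lam μp q0 q1 gT gF hq0m hq1m hgTm hgFm h00 h01 h10 h11 n vhat hvhat
    _ _ R (le_iSup₂_of_le _ hc0 le_rfl) (le_iSup₂_of_le _ hc1 le_rfl)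
  rw [hv0, hv1, sub_zero] at H
  have hbern : (1 / 2 : ℝ) ≤ (1 - 1 / (2 * n)) ^ n := by
    have h := one_add_mul_le_pow (a := -(1 / (2 * (n : ℝ)))) (by
      have : 1 / (2 * (n : ℝ)) ≤ 1 := by
        rw [div_le_one (by positivity)]; linarith
      linarith) n
    have e : 1 + (n : ℝ) * -(1 / (2 * n)) = 1 / 2 := by field_simp; norm_num
    rw [e] at h
    simpa [sub_eq_add_neg] using h
  have hhalf : ENNReal.ofReal (1 / 2) ≤ (∫⁻ p, ENNReal.ofReal
      (√(q0 p) * √(q1 p) + √(1 - q0 p) * √(1 - q1 p)) ∂(Policy.joint lam μp)) ^ n := by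
    refine le_trans ?_ (pow_le_pow_left' h_affint n)
    rw [← ENNReal.ofReal_pow]
    · exact ENNReal.ofReal_le_ofReal hbern
    · rw [sub_nonneg, div_le_one (by positivity)]; linarith
  have H2 : ENNReal.ofReal ((Emu lam μp w / (2 * t)) ^ 2 * (1 / 2) ^ 2) ≤ 4 * R := by
    refine le_trans ?_ H
    rw [ENNReal.ofReal_mul (sq_nonneg _), ENNReal.ofReal_pow (p := 1 / 2) (by norm_num)]
    gcongr
  have hBV : 1 - Emu lam μp b / V = Emu lam μp w / V := by
    field_simp
    linarith
  rw [hBV]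
  have h4 : 4 * ENNReal.ofReal (V / (32 * Real.exp 1 * n) * (Emu lam μp w / V) ^ 2) ≤ 4 * R := by
    refine le_trans ?_ H2
    rw [show (4 : ℝ≥0∞) = ENNReal.ofReal 4 by simp, ← ENNReal.ofReal_mul (by norm_num)]
    apply ENNReal.ofReal_le_ofReal
    have e1 : (Emu lam μp w / (2 * t)) ^ 2 * (1 / 2) ^ 2 = Emu lam μp w ^ 2 / (8 * n * V) := by
      rw [div_pow, mul_pow, ht2]
      field_simp
      norm_num
    have e2 : 4 * (V / (32 * Real.exp 1 * n) * (Emu lam μp w / V) ^ 2) =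
        Emu lam μp w ^ 2 / (8 * n * V) / Real.exp 1 := by
      have := Real.exp_pos 1
      field_simp
      ring
    rw [e1, e2]
    exact div_le_self (by positivity) (Real.one_le_exp (by norm_num))
  exact (ENNReal.mul_le_mul_iff_right (by norm_num) (by norm_num)).1 h4
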